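/- Let I be an instance with n agents and n objects and let v be a unit-sum valuation profile consistent with I. Set t_1 = 1/n^{1/3} and t_i = 1/(min{i, n^{1/3}}·n^{2/3}) for 2 ≤ i ≤ n. Let μ_MM be obtained from a maximum-weight matching of G_I under the weights assigning to each edge e = (a_i, h_j) of rank r the weight t_r if v_i(h_j) ≥ t_r and 0 otherwise, by deleting all edges of weight 0. Let μ'_aux be a matching of G_I containing the maximum possible number of rank-1 edges, let X'_1 be the set of rank-1 edges of μ'_aux, and let μ_aux be the set of edges (a, h) of μ'_aux such that neither a nor h occurs in an edge of μ_MM. If μ_MM contains at least one rank-1 edge, then SW(μ_MM | v) + SW(μ_aux | v) ≥ max{|X'_1|/(2n), 1/n^{1/3}}. -/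

import Mathlib

open Finset
open scoped Classical

/-- A one-sided matching instance with `n` agents and `n` objects.  Agent `i` has a
nonempty acceptable set `accept i` and a weak order `pref i` on it
(`pref i h h'` means agent `i` weakly prefers object `h` to object `h'`). -/
structure OSMInstance (n : ℕ) where
  accept : Fin n → Finset (Fin n)
  accept_nonempty : ∀ i, (accept i).Nonempty
  pref : Fin n → Fin n → Fin n → Prop
  pref_refl : ∀ i h, h ∈ accept i → pref i h h
  pref_trans : ∀ i h₁ h₂ h₃, h₁ ∈ accept i → h₂ ∈ accept i → h₃ ∈ accept i →
    pref i h₁ h₂ → pref i h₂ h₃ → pref i h₁ h₃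
  pref_total : ∀ i h₁ h₂, h₁ ∈ accept i → h₂ ∈ accept i → pref i h₁ h₂ ∨ pref i h₂ h₁

namespace OSMInstance

variable {n : ℕ}

/-- Agent `i` strictly prefers object `h` to object `h'`. -/
def strictPref (I : OSMInstance n) (i h h' : Fin n) : Prop :=
  I.pref i h h' ∧ ¬ I.pref i h' h

/-- The rank of the edge `(i, h)` of `G_I`: one plus the number of acceptable objects
that agent `i` strictly prefers to `h`. -/
noncomputable def edgeRank (I : OSMInstance n) (e : Fin n × Fin n) : ℕ :=
  ((I.accept e.1).filter (fun h' => I.strictPref e.1 h' e.2)).card + 1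

/-- A matching of `G_I`: a set of acceptable (agent, object) pairs in which every agent
and every object occurs at most once. -/
def IsMatching (I : OSMInstance n) (μ : Finset (Fin n × Fin n)) : Prop :=
  (∀ e ∈ μ, e.2 ∈ I.accept e.1) ∧
  (∀ e ∈ μ, ∀ e' ∈ μ, e.1 = e'.1 → e = e') ∧
  (∀ e ∈ μ, ∀ e' ∈ μ, e.2 = e'.2 → e = e')

/-- Total weight of a set of edges under the edge weights `w`. -/
def weightSum (w : Fin n × Fin n → ℝ) (μ : Finset (Fin n × Fin n)) : ℝ :=
  ∑ e ∈ μ, w e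

/-- Social welfare of the set of edges `μ` under the valuation profile `v`. -/
def SW (_I : OSMInstance n) (v : Fin n → Fin n → ℝ) (μ : Finset (Fin n × Fin n)) : ℝ :=
  ∑ e ∈ μ, v e.1 e.2

/-- `μ` is a maximum-weight matching of `G_I` with respect to edge weights `w`. -/
def IsMaxWeightMatching (I : OSMInstance n) (w : Fin n × Fin n → ℝ)
    (μ : Finset (Fin n × Fin n)) : Prop :=
  I.IsMatching μ ∧ ∀ μ', I.IsMatching μ' → weightSum w μ' ≤ weightSum w μ

/-- `μ` is a priority-`p` matching: a maximum-weight matching when every rank-`r` edge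
gets weight `p r`. -/
noncomputable def IsPriorityMatching (I : OSMInstance n) (p : ℕ → ℝ)
    (μ : Finset (Fin n × Fin n)) : Prop :=
  I.IsMaxWeightMatching (fun e => p (I.edgeRank e)) μ

/-- `v` is a valuation profile consistent with the instance: values lie in `[0,1]`,
unacceptable objects have value `0`, and on acceptable objects the values represent
the weak order. -/
def Consistent (I : OSMInstance n) (v : Fin n → Fin n → ℝ) : Prop :=
  (∀ i h, 0 ≤ v i h ∧ v i h ≤ 1) ∧
  (∀ i h, h ∉ I.accept i → v i h = 0) ∧
  (∀ i h h', h ∈ I.accept i → h' ∈ I.accept i → (I.pref i h h' ↔ v i h' ≤ v i h))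

/-- Unit-sum valuations: each agent's values over acceptable objects sum to `1`. -/
def UnitSum (I : OSMInstance n) (v : Fin n → Fin n → ℝ) : Prop :=
  ∀ i, ∑ h ∈ I.accept i, v i h = 1

/-- Unit-range valuations: each agent values some acceptable object `1`, some
acceptable object `0`, and has two non-equivalent acceptable objects. -/
def UnitRange (I : OSMInstance n) (v : Fin n → Fin n → ℝ) : Prop :=
  ∀ i, (∃ h ∈ I.accept i, v i h = 1) ∧ (∃ h ∈ I.accept i, v i h = 0) ∧
    ∃ h ∈ I.accept i, ∃ h' ∈ I.accept i, I.strictPref i h h'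

/-- Agent `i` is unmatched in `μ`. -/
def Unmatched (_I : OSMInstance n) (μ : Finset (Fin n × Fin n)) (i : Fin n) : Prop :=
  ∀ h, (i, h) ∉ μ

/-- Agent `i` weakly prefers their allocation in `μ'` to their allocation in `μ`
(being unmatched is strictly worse than receiving any acceptable object). -/
def WeakImprove (I : OSMInstance n) (μ' μ : Finset (Fin n × Fin n)) (i : Fin n) : Prop :=
  I.Unmatched μ i ∨ ∃ h h', (i, h) ∈ μ ∧ (i, h') ∈ μ' ∧ I.pref i h' h

/-- Agent `i` strictly prefers their allocation in `μ'` to their allocation in `μ`. -/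
def StrictImprove (I : OSMInstance n) (μ' μ : Finset (Fin n × Fin n)) (i : Fin n) : Prop :=
  (I.Unmatched μ i ∧ ∃ h', (i, h') ∈ μ') ∨
    ∃ h h', (i, h) ∈ μ ∧ (i, h') ∈ μ' ∧ I.strictPref i h' h

/-- `μ` is a Pareto optimal matching of `G_I`. -/
def ParetoOptimal (I : OSMInstance n) (μ : Finset (Fin n × Fin n)) : Prop :=
  I.IsMatching μ ∧
    ¬ ∃ μ', I.IsMatching μ' ∧ (∀ i, I.WeakImprove μ' μ i) ∧ ∃ i, I.StrictImprove μ' μ i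

/-- `sig I μ r` is the number of rank-`r` edges of `μ` (as an integer). -/
noncomputable def sig (I : OSMInstance n) (μ : Finset (Fin n × Fin n)) (r : ℕ) : ℤ :=
  ((μ.filter (fun e => I.edgeRank e = r)).card : ℤ)

end OSMInstance

/-- Lexicographic comparison `f ≤ g` of the length-`len` tuples `(f 0, …, f (len-1))`
and `(g 0, …, g (len-1))`. -/
def LexLe (len : ℕ) (f g : ℕ → ℤ) : Prop :=
  (∀ j < len, f j = g j) ∨ ∃ j < len, (∀ i < j, f i = g i) ∧ f j < g j

namespace OSMInstance

variable {n : ℕ}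

/-- `μ` is a rank-maximal matching: it lexicographically maximizes `(s_1, …, s_n)`. -/
noncomputable def RankMaximal (I : OSMInstance n) (μ : Finset (Fin n × Fin n)) : Prop :=
  I.IsMatching μ ∧ ∀ μ', I.IsMatching μ' →
    LexLe n (fun j => I.sig μ' (j + 1)) (fun j => I.sig μ (j + 1))

/-- `μ` is a max-cardinality rank-maximal matching: it lexicographically maximizes
`(Σ_i s_i, s_1, …, s_n)`. -/
noncomputable def MaxCardRankMaximal (I : OSMInstance n) (μ : Finset (Fin n × Fin n)) : Prop :=
  I.IsMatching μ ∧ ∀ μ', I.IsMatching μ' →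
    LexLe (n + 1) (fun j => if j = 0 then (μ'.card : ℤ) else I.sig μ' j)
      (fun j => if j = 0 then (μ.card : ℤ) else I.sig μ j)

/-- `μ` is a fair matching: it lexicographically maximizes
`(Σ_i s_i, -s_n, -s_(n-1), …, -s_1)`. -/
noncomputable def FairMatching (I : OSMInstance n) (μ : Finset (Fin n × Fin n)) : Prop :=
  I.IsMatching μ ∧ ∀ μ', I.IsMatching μ' →
    LexLe (n + 1) (fun j => if j = 0 then (μ'.card : ℤ) else -I.sig μ' (n + 1 - j))
      (fun j => if j = 0 then (μ.card : ℤ) else -I.sig μ (n + 1 - j))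

end OSMInstance

/-- The priority vector for rank-maximal matchings: a rank-`r` edge gets weight
`n ^ (2 * (n - r + 1))`. -/
noncomputable def pRankMaximal (n : ℕ) : ℕ → ℝ :=
  fun r => (n : ℝ) ^ (2 * (n - r + 1))

/-- The priority vector for max-cardinality rank-maximal matchings: a rank-`r` edge gets
weight `n ^ (2 * n) + n ^ (2 * (n - r))`. -/
noncomputable def pMaxCardRankMaximal (n : ℕ) : ℕ → ℝ :=
  fun r => (n : ℝ) ^ (2 * n) + (n : ℝ) ^ (2 * (n - r))

/-- The priority vector for fair matchings: a rank-`r` edge gets weight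
`4 * n ^ (2 * n) - 2 * n ^ (r - 1)`. -/
noncomputable def pFairVec (n : ℕ) : ℕ → ℝ :=
  fun r => 4 * (n : ℝ) ^ (2 * n) - 2 * (n : ℝ) ^ (r - 1)

/-- The set `𝕡` of the three priority vectors of interest. -/
noncomputable def PrioritySet (n : ℕ) : Set (ℕ → ℝ) :=
  {pRankMaximal n, pMaxCardRankMaximal n, pFairVec n}

/-- The four matching properties considered: Pareto optimal, rank-maximal,
max-cardinality rank-maximal, and fair. -/
inductive MatchProp where
  | po | rm | mcrm | fair

/-- `μ` satisfies the property `X` with respect to the instance `I`. -/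
noncomputable def SatisfiesProp {n : ℕ} (X : MatchProp) (I : OSMInstance n)
    (μ : Finset (Fin n × Fin n)) : Prop :=
  match X with
  | .po => I.ParetoOptimal μ
  | .rm => I.RankMaximal μ
  | .mcrm => I.MaxCardRankMaximal μ
  | .fair => I.FairMatching μ

namespace OSMInstance

variable {n : ℕ}

/-- An acceptable edge has rank at most `n`. -/
lemma edgeRank_le (I : OSMInstance n) (e : Fin n × Fin n) (he : e.2 ∈ I.accept e.1) :
    I.edgeRank e ≤ n := by
  have hlt : ((I.accept e.1).filter (fun h' => I.strictPref e.1 h' e.2)).card <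
      (univ : Finset (Fin n)).card := by
    refine card_lt_card (ssubset_univ_iff.mpr fun h => ?_)
    have hmem := mem_univ e.2
    rw [← h, mem_filter] at hmem
    exact hmem.2.2 (I.pref_refl _ _ he)
  rw [card_univ, Fintype.card_fin] at hlt
  exact hlt

/-- Under unit-sum valuations, an acceptable rank-1 edge has value at least `1 / n`. -/
lemma one_div_le_of_edgeRank_eq_one (I : OSMInstance n) {v : Fin n → Fin n → ℝ}
    (hv : I.Consistent v) (hus : I.UnitSum v) (e : Fin n × Fin n)
    (he : e.2 ∈ I.accept e.1) (hr : I.edgeRank e = 1) : 1 / (n : ℝ) ≤ v e.1 e.2 := by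
  have hmax : ∀ h ∈ I.accept e.1, v e.1 h ≤ v e.1 e.2 := by
    intro h hh
    rw [← hv.2.2 e.1 e.2 h he hh]
    by_contra hnot
    have hpref := (I.pref_total e.1 e.2 h he hh).resolve_left hnot
    have hempty : (I.accept e.1).filter (fun h' => I.strictPref e.1 h' e.2) = ∅ := by
      rw [← card_eq_zero]
      simpa [edgeRank] using hr
    exact notMem_empty h (hempty ▸ mem_filter.mpr ⟨hh, hpref, hnot⟩)
  have hsum := sum_le_card_nsmul _ _ _ hmax
  rw [hus e.1, nsmul_eq_mul] at hsum
  have hcard : ((I.accept e.1).card : ℝ) ≤ n := by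
    exact_mod_cast card_finset_fin_le (I.accept e.1)
  have hn : (0 : ℝ) < n := by exact_mod_cast e.1.pos
  rw [div_le_iff₀ hn]
  nlinarith [(hv.1 e.1 e.2).1]

/-- A set of edges no two of which share an agent or an object has at most `2 * ν.card`
members sharing an agent or an object with an edge of `ν`. -/
lemma IsMatching.card_filter_incident_le {I : OSMInstance n} {μ : Finset (Fin n × Fin n)}
    (hμ : I.IsMatching μ) (ν : Finset (Fin n × Fin n)) :
    (μ.filter (fun e => ¬ ∀ e' ∈ ν, e.1 ≠ e'.1 ∧ e.2 ≠ e'.2)).card ≤ 2 * ν.card := by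
  have hfst : (μ.filter (fun e => e.1 ∈ ν.image Prod.fst)).card ≤ (ν.image Prod.fst).card :=
    card_le_card_of_injOn Prod.fst (fun e he => (mem_filter.mp he).2)
      fun e he e' he' h => hμ.2.1 e (mem_filter.mp he).1 e' (mem_filter.mp he').1 h
  have hsnd : (μ.filter (fun e => e.2 ∈ ν.image Prod.snd)).card ≤ (ν.image Prod.snd).card :=
    card_le_card_of_injOn Prod.snd (fun e he => (mem_filter.mp he).2)
      fun e he e' he' h => hμ.2.2 e (mem_filter.mp he).1 e' (mem_filter.mp he').1 h
  have hsub : μ.filter (fun e => ¬ ∀ e' ∈ ν, e.1 ≠ e'.1 ∧ e.2 ≠ e'.2) ⊆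
      μ.filter (fun e => e.1 ∈ ν.image Prod.fst) ∪
        μ.filter (fun e => e.2 ∈ ν.image Prod.snd) := by
    intro e he
    obtain ⟨heμ, hinc⟩ := mem_filter.mp he
    push Not at hinc
    obtain ⟨e', he', hinc⟩ := hinc
    by_cases h1 : e.1 = e'.1
    · exact mem_union_left _ (mem_filter.mpr ⟨heμ, mem_image.mpr ⟨e', he', h1.symm⟩⟩)
    · exact mem_union_right _ (mem_filter.mpr ⟨heμ, mem_image.mpr ⟨e', he', (hinc h1).symm⟩⟩)
  have hfst' : (ν.image Prod.fst).card ≤ ν.card := card_image_le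
  have hsnd' : (ν.image Prod.snd).card ≤ ν.card := card_image_le
  have hunion := (card_le_card hsub).trans (card_union_le _ _)
  omega

end OSMInstance

/-- The thresholds `1 / n^(1/3)` and `1 / (min i n^(1/3) * n^(2/3))` are at least `1 / n`. -/
lemma one_div_le_threshold {n : ℕ} (hn : 0 < n) (t : ℕ → ℝ)
    (ht1 : t 1 = 1 / (n : ℝ) ^ ((1 : ℝ) / 3))
    (ht : ∀ i, 2 ≤ i → i ≤ n →
      t i = 1 / (min (i : ℝ) ((n : ℝ) ^ ((1 : ℝ) / 3)) * (n : ℝ) ^ ((2 : ℝ) / 3)))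
    (r : ℕ) (hr1 : 1 ≤ r) (hrn : r ≤ n) : 1 / (n : ℝ) ≤ t r := by
  have hn0 : (0 : ℝ) < n := by exact_mod_cast hn
  have hn1 : (1 : ℝ) ≤ n := by exact_mod_cast hn
  rcases hr1.eq_or_lt with rfl | hr2
  · rw [ht1]
    refine one_div_le_one_div_of_le (by positivity) ?_
    simpa using Real.rpow_le_rpow_of_exponent_le hn1 (by norm_num : (1 : ℝ) / 3 ≤ 1)
  · rw [ht r hr2 hrn]
    have hr0 : (0 : ℝ) < r := by exact_mod_cast (by omega : 0 < r)
    refine one_div_le_one_div_of_le (by positivity) ?_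
    calc min (r : ℝ) ((n : ℝ) ^ ((1 : ℝ) / 3)) * (n : ℝ) ^ ((2 : ℝ) / 3)
        ≤ (n : ℝ) ^ ((1 : ℝ) / 3) * (n : ℝ) ^ ((2 : ℝ) / 3) := by
          gcongr
          exact min_le_right _ _
      _ = n := by
          rw [← Real.rpow_add hn0]
          norm_num

/-- if the filtered maximum-weight matching contains a rank-1 edge, then
together with the auxiliary matching its welfare is at least
`max (|X'_1| / (2n)) (1 / n^(1/3))`, for unit-sum valuations. -/
theorem aux_welfare_bound_rank1 {n : ℕ} (I : OSMInstance n)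
    (v : Fin n → Fin n → ℝ) (hv : I.Consistent v) (hus : I.UnitSum v)
    (t : ℕ → ℝ) (ht1 : t 1 = 1 / (n : ℝ) ^ ((1 : ℝ) / 3))
    (ht : ∀ i, 2 ≤ i → i ≤ n →
      t i = 1 / (min (i : ℝ) ((n : ℝ) ^ ((1 : ℝ) / 3)) * (n : ℝ) ^ ((2 : ℝ) / 3)))
    (w : Fin n × Fin n → ℝ)
    (hw : ∀ e, w e = if t (I.edgeRank e) ≤ v e.1 e.2 then t (I.edgeRank e) else 0)
    (μ₀ : Finset (Fin n × Fin n)) (hμ₀ : I.IsMaxWeightMatching w μ₀)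
    (μMM : Finset (Fin n × Fin n)) (hμMM : μMM = μ₀.filter (fun e => w e ≠ 0))
    (μaux' : Finset (Fin n × Fin n)) (haux' : I.IsMatching μaux')
    (hauxmax : ∀ μ'', I.IsMatching μ'' →
      (μ''.filter (fun e => I.edgeRank e = 1)).card ≤
        (μaux'.filter (fun e => I.edgeRank e = 1)).card)
    (X1 : Finset (Fin n × Fin n)) (hX1 : X1 = μaux'.filter (fun e => I.edgeRank e = 1))
    (μaux : Finset (Fin n × Fin n))
    (hμaux : μaux = μaux'.filter (fun e => ∀ e' ∈ μMM, e.1 ≠ e'.1 ∧ e.2 ≠ e'.2))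
    (hrank1 : ∃ e ∈ μMM, I.edgeRank e = 1) :
    max ((X1.card : ℝ) / (2 * n)) (1 / (n : ℝ) ^ ((1 : ℝ) / 3)) ≤
      I.SW v μMM + I.SW v μaux := by
  obtain ⟨e₀, he₀, hr₀⟩ := hrank1
  have hn : 0 < n := e₀.1.pos
  have hn0 : (0 : ℝ) < n := by exact_mod_cast hn
  have hthr : ∀ e ∈ μMM, e.2 ∈ I.accept e.1 ∧ t (I.edgeRank e) ≤ v e.1 e.2 := by
    intro e he
    rw [hμMM, mem_filter, hw] at he
    exact ⟨hμ₀.1.1 e he.1, by_contra fun h => he.2 (if_neg h)⟩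
  have hauxpos : 0 ≤ I.SW v μaux := sum_nonneg fun e _ => (hv.1 e.1 e.2).1
  refine max_le ?_ ?_
  · have hMM : (μMM.card : ℝ) * (1 / n) ≤ I.SW v μMM := by
      rw [← nsmul_eq_mul]
      refine card_nsmul_le_sum _ _ _ fun e he => ?_
      obtain ⟨hacc, hle⟩ := hthr e he
      exact (one_div_le_threshold hn t ht1 ht _ (Nat.le_add_left 1 _)
        (I.edgeRank_le e hacc)).trans hle
    have haux : ((μaux.filter (fun e => I.edgeRank e = 1)).card : ℝ) * (1 / n) ≤
        I.SW v μaux := by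
      rw [← nsmul_eq_mul]
      refine (card_nsmul_le_sum _ (fun e => v e.1 e.2) _ fun e he => ?_).trans
        (sum_le_sum_of_subset_of_nonneg (filter_subset _ _) fun e _ _ => (hv.1 e.1 e.2).1)
      obtain ⟨heaux, hr⟩ := mem_filter.mp he
      rw [hμaux] at heaux
      exact I.one_div_le_of_edgeRank_eq_one hv hus e (haux'.1 e (mem_filter.mp heaux).1) hr
    have hcard : X1.card ≤ (μaux.filter (fun e => I.edgeRank e = 1)).card + 2 * μMM.card := by
      refine (card_le_card ?_).trans ((card_union_le _ _).trans
        (Nat.add_le_add_left (haux'.card_filter_incident_le μMM) _))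
      intro e he
      rw [hX1, mem_filter] at he
      rw [hμaux, mem_union, mem_filter, mem_filter, mem_filter]
      tauto
    have hcard' : (X1.card : ℝ) ≤
        (μaux.filter (fun e => I.edgeRank e = 1)).card + 2 * μMM.card := by
      exact_mod_cast hcard
    calc (X1.card : ℝ) / (2 * n) = X1.card * (1 / n) / 2 := by field_simp
      _ ≤ ((μaux.filter (fun e => I.edgeRank e = 1)).card + 2 * μMM.card) * (1 / n) / 2 := by
          gcongr
      _ ≤ I.SW v μMM + I.SW v μaux := by linarith
  · have hsingle : v e₀.1 e₀.2 ≤ I.SW v μMM :=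
      single_le_sum (f := fun e : Fin n × Fin n => v e.1 e.2)
        (fun e _ => (hv.1 e.1 e.2).1) he₀
    have hle := (hthr e₀ he₀).2
    rw [hr₀, ht1] at hle
    linarith
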